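/- Let d ≥ 2, let n ≥ 2, let a_0 ≤ a_1 ≤ ⋯ ≤ a_{n−1} be natural numbers, and let k satisfy 2 ≤ k ≤ d and k ≡ n (mod d−1). Then there exist a finite prefix code C over Fin d, a bijection g : Fin n → C with labeling r = (a ∘ g⁻¹) : C → ℕ (so the multiset of labels of (C, r) is {a_0, …, a_{n−1}}), and a word u over Fin d such that: (1) (C, r) is w-optimal, i.e., for every finite prefix code D over Fin d with labeling s : D → ℕ for which there exists a bijection f : C → D with r = s ∘ f, one has max_{x ∈ C} (|x| + r(x)) ≤ max_{y ∈ D} (|y| + s(y)); (2) for each i < k, the word u ++ [i] belongs to C, r(u ++ [i]) = a_i, and |u ++ [i]| is the maximum length of any codeword in C; (3) every element of C having u as a prefix is of the form u ++ [i] for some i < k. -/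

import Mathlib

/-!
The optimal value of `max (|x| + r x)` is the least `W` with `∑ d ^ a i ≤ d ^ W`. That no code does
better is Kraft's inequality (`kraft_sum_le`): a code of value `W` has `a i ≤ W - |x i|`.

For the construction, the `k` smallest weights are replaced by a single weight `a (k-1) + 1`,
standing for their common parent `u`. The Kraft sum still fits into `d ^ W` (`merged_sum_le`):
after division by `d ^ a (k-1)`, the sum `S` over the indices `i ≥ k` is divisible by `d - 1`
because `k ≡ n [MOD d - 1]`, while `d ^ (W - a (k-1)) ≡ 1`; as `k ≥ 2` the gap between them is at
least `2`, hence at least `d`. The converse of Kraft's inequality (`exists_code_of_sum_le`) gives a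
code with lengths exactly `W - weight`, and appending the letters `0, …, k-1` to `u` yields leaves
of length `W - a (k-1)`, which is maximal since `a` is monotone.
-/

/-- The words of length `L` extending `c`; this reading is only valid when `|c| ≤ L`, since the
truncated subtraction gives `{c}` otherwise. -/
def extensions {d : ℕ} (L : ℕ) (c : List (Fin d)) : Finset (List (Fin d)) :=
  (Finset.univ : Finset (Fin (L - c.length) → Fin d)).image fun v => c ++ List.ofFn v

lemma card_extensions {d : ℕ} (L : ℕ) (c : List (Fin d)) :
    (extensions L c).card = d ^ (L - c.length) := by
  unfold extensions
  rw [Finset.card_image_of_injective]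
  · simp
  · intro v w h
    exact List.ofFn_injective (List.append_cancel_left h)

lemma mem_extensions {d : ℕ} {L : ℕ} {c w : List (Fin d)} (hc : c.length ≤ L) :
    w ∈ extensions L c ↔ w.length = L ∧ c <+: w := by
  unfold extensions
  simp only [Finset.mem_image, Finset.mem_univ, true_and]
  constructor
  · rintro ⟨v, rfl⟩
    simp
    omega
  · rintro ⟨hl, t, rfl⟩
    have ht : t.length = L - c.length := by simp at hl; omega
    rw [← ht]
    exact ⟨t.get, by rw [List.ofFn_get]⟩

/-- Kraft's inequality for a prefix-free family of words of length at most `L`, with denominators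
cleared. -/
lemma kraft_sum_le {d n : ℕ} (g : Fin n → List (Fin d)) (L : ℕ)
    (hL : ∀ i, (g i).length ≤ L) (hg : ∀ i j, g i <+: g j → i = j) :
    ∑ i, d ^ (L - (g i).length) ≤ d ^ L := by
  have hdisj : Set.PairwiseDisjoint (↑(Finset.univ : Finset (Fin n)) : Set (Fin n))
      (fun i => extensions L (g i)) := by
    intro i _ j _ hij
    refine Finset.disjoint_left.2 fun w hi hj => hij ?_
    have h1 := ((mem_extensions (hL i)).1 hi).2
    have h2 := ((mem_extensions (hL j)).1 hj).2
    rcases List.prefix_or_prefix_of_prefix h1 h2 with h | h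
    · exact hg _ _ h
    · exact (hg _ _ h).symm
  calc ∑ i, d ^ (L - (g i).length)
      = (Finset.univ.biUnion fun i => extensions L (g i)).card := by
        rw [Finset.card_biUnion hdisj]
        simp [card_extensions]
    _ ≤ (extensions L ([] : List (Fin d))).card := by
        refine Finset.card_le_card fun w hw => ?_
        obtain ⟨i, -, hi⟩ := Finset.mem_biUnion.1 hw
        exact (mem_extensions (by simp)).2 ⟨((mem_extensions (hL i)).1 hi).1, List.nil_prefix⟩
    _ = d ^ L := by simp [card_extensions]

/-- The converse of Kraft's inequality, with lengths `W - e i`. Words are chosen greedily in order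
of increasing length; counting shows that the words chosen so far leave room for the next one. -/
lemma exists_code_of_sum_le {d : ℕ} (hd : 2 ≤ d) {ι : Type*} [DecidableEq ι] (e : ι → ℕ) (W : ℕ)
    (s : Finset ι) : ∑ i ∈ s, d ^ e i ≤ d ^ W →
    ∃ g : ι → List (Fin d), (∀ i ∈ s, (g i).length + e i = W) ∧
      ∀ i ∈ s, ∀ j ∈ s, g i <+: g j → i = j := by
  induction s using Finset.induction_on_min_value e with
  | empty => intro _; exact ⟨fun _ => [], by simp, by simp⟩
  | insert m s hm hmin ih =>
    intro hsum
    rw [Finset.sum_insert hm] at hsum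
    obtain ⟨g, hlen, hpre⟩ := ih (by omega)
    have hmW : e m ≤ W := (Nat.pow_le_pow_iff_right (by omega : 1 < d)).1 (by omega : d ^ e m ≤ d ^ W)
    have hlt : (s.biUnion fun i => extensions (W - e m) (g i)).card
        < (extensions (W - e m) ([] : List (Fin d))).card := by
      refine Finset.card_biUnion_le.trans_lt ?_
      simp only [card_extensions, List.length_nil, Nat.sub_zero]
      have hpos : 0 < d ^ e m := by positivity
      refine Nat.lt_of_mul_lt_mul_left (a := d ^ e m) ?_
      rw [Finset.mul_sum, ← pow_add, show e m + (W - e m) = W by omega]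
      have : ∑ i ∈ s, d ^ e m * d ^ (W - e m - (g i).length) = ∑ i ∈ s, d ^ e i := by
        refine Finset.sum_congr rfl fun i hi => ?_
        rw [← pow_add]
        have h1 := hlen i hi
        have h2 := hmin i hi
        congr 1
        omega
      omega
    obtain ⟨w, hw, hw'⟩ := Finset.exists_mem_notMem_of_card_lt_card hlt
    have hwl : w.length = W - e m := ((mem_extensions (by simp)).1 hw).1
    have hno : ∀ i ∈ s, ¬ g i <+: w := fun i hi hp => hw' <| Finset.mem_biUnion.2
      ⟨i, hi, (mem_extensions (by have := hlen i hi; have := hmin i hi; omega)).2 ⟨hwl, hp⟩⟩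
    have hno' : ∀ i ∈ s, ¬ w <+: g i := fun i hi hp => by
      have h1 := hlen i hi
      have h2 := hmin i hi
      have h3 := hp.eq_of_length_le (by omega)
      exact hno i hi (h3 ▸ List.prefix_rfl)
    have hne : ∀ i ∈ s, i ≠ m := fun i hi h => hm (h ▸ hi)
    refine ⟨Function.update g m w, ?_, ?_⟩
    · intro i hi
      rcases Finset.mem_insert.1 hi with rfl | hi
      · simp; omega
      · rw [Function.update_of_ne (hne i hi)]; exact hlen i hi
    · intro i hi j hj h
      rcases Finset.mem_insert.1 hi with rfl | his <;> rcases Finset.mem_insert.1 hj with rfl | hjs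
      · rfl
      · rw [Function.update_self, Function.update_of_ne (hne j hjs)] at h
        exact absurd h (hno' j hjs)
      · rw [Function.update_self, Function.update_of_ne (hne i his)] at h
        exact absurd h (hno i his)
      · rw [Function.update_of_ne (hne j hjs), Function.update_of_ne (hne i his)] at h
        exact hpre i his j hjs h

/-- Merging the `k` smallest weights into the single weight `a (k-1) + 1` does not push the Kraft
sum above `d ^ W`; `p` is the index `k - 1`. -/
lemma merged_sum_le {d : ℕ} (hd : 2 ≤ d) (n k : ℕ) (a : Fin n → ℕ) (ha : Monotone a)
    (hk2 : 2 ≤ k) (hkn : k ≤ n) (hkmod : k ≡ n [MOD d - 1]) (W : ℕ) (p : Fin n)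
    (hp : (p : ℕ) + 1 = k) (hW : ∑ i, d ^ a i ≤ d ^ W) :
    d ^ (a p + 1) + ∑ i ∈ Finset.Ioi p, d ^ a i ≤ d ^ W := by
  obtain ⟨q, rfl⟩ : ∃ q, d = q + 1 := ⟨d - 1, by omega⟩
  have hpos : 0 < (q + 1) ^ a p := by positivity
  let z : Fin n := ⟨0, by omega⟩
  have hzp : z ≠ p := by
    intro h
    have := congrArg Fin.val h
    simp only [z] at this
    omega
  have hsplit : (q + 1) ^ a z + ((q + 1) ^ a p + ∑ i ∈ Finset.Ioi p, (q + 1) ^ a i)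
      ≤ (q + 1) ^ W := by
    refine le_trans ?_ hW
    have hz : z ∉ insert p (Finset.Ioi p) := by
      simp only [Finset.mem_insert, Finset.mem_Ioi, not_or]
      exact ⟨hzp, by simp [z, Fin.lt_def]⟩
    rw [← Finset.sum_insert (f := fun i => (q + 1) ^ a i) (by simp : p ∉ Finset.Ioi p),
      ← Finset.sum_insert (f := fun i => (q + 1) ^ a i) hz]
    exact Finset.sum_le_sum_of_subset (Finset.subset_univ _)
  have hzpos : 0 < (q + 1) ^ a z := by positivity
  have hpW : a p ≤ W :=
    (Nat.pow_le_pow_iff_right (by omega : 1 < q + 1)).1 (by omega : (q + 1) ^ a p ≤ (q + 1) ^ W)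
  have hfac : ∑ i ∈ Finset.Ioi p, (q + 1) ^ a i
      = (q + 1) ^ a p * ∑ i ∈ Finset.Ioi p, (q + 1) ^ (a i - a p) := by
    rw [Finset.mul_sum]
    refine Finset.sum_congr rfl fun i hi => ?_
    rw [← pow_add]
    have := ha (Finset.mem_Ioi.1 hi).le
    congr 1
    omega
  have hWfac : (q + 1) ^ W = (q + 1) ^ a p * (q + 1) ^ (W - a p) := by
    rw [← pow_add]; congr 1; omega
  have hone : ∀ m, (q + 1) ^ m ≡ 1 [MOD q] := fun m => by
    simpa using ((show q + 1 ≡ 1 [MOD q] by simp [Nat.ModEq]).pow m)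
  have hS : q ∣ ∑ i ∈ Finset.Ioi p, (q + 1) ^ (a i - a p) := by
    have h1 : ∑ i ∈ Finset.Ioi p, (q + 1) ^ (a i - a p) ≡ ∑ i ∈ Finset.Ioi p, 1 [MOD q] :=
      Nat.ModEq.sum fun i _ => hone _
    have h2 : ∑ i ∈ Finset.Ioi p, 1 = n - k := by
      simp [Fin.card_Ioi]; omega
    rw [h2] at h1
    exact (h1.dvd_iff dvd_rfl).2 ((Nat.modEq_iff_dvd' hkn).1 hkmod)
  obtain ⟨s, hs⟩ := hS
  obtain ⟨t, ht⟩ : ∃ t, (q + 1) ^ (W - a p) = 1 + q * t := by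
    obtain ⟨t, ht⟩ := (Nat.modEq_iff_dvd' (Nat.one_le_pow _ _ (by omega))).1 (hone (W - a p)).symm
    have : 1 ≤ (q + 1) ^ (W - a p) := Nat.one_le_pow _ _ (by omega)
    exact ⟨t, by omega⟩
  rw [hfac, hWfac, hs, ht] at hsplit ⊢
  have h1 : 1 + q * s < 1 + q * t := by
    refine Nat.lt_of_mul_lt_mul_left (a := (q + 1) ^ a p) ?_
    rw [mul_add, mul_one]
    omega
  have h2 : s < t := Nat.lt_of_mul_lt_mul_left (a := q) (by omega)
  rw [pow_succ, ← mul_add]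
  refine Nat.mul_le_mul_left _ ?_
  have : q * (s + 1) ≤ q * t := Nat.mul_le_mul_left _ h2
  rw [mul_add] at this
  omega

/-- A prefix code over the alphabet `Fin d`: a set of words whose elements are
pairwise incomparable under the prefix relation. -/
def IsPrefixCode {d : ℕ} (C : Set (List (Fin d))) : Prop :=
  ∀ x ∈ C, ∀ y ∈ C, x <+: y → x = y

/-- There is a w-optimal tree (for `w(C, r) = max_{x∈C}(|x| + r x)`) in which the `k`
smallest weights `a 0, …, a (k-1)` label sibling leaves at the deepest level, with no
other siblings. -/
theorem stmt_15 {d : ℕ} (hd : 2 ≤ d) (n k : ℕ) (hn : 2 ≤ n)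
    (a : Fin n → ℕ) (ha : Monotone a)
    (hk2 : 2 ≤ k) (hkd : k ≤ d) (hkmod : k ≡ n [MOD d - 1]) :
    ∃ (C : Finset (List (Fin d))) (g : Fin n → List (Fin d))
      (r : List (Fin d) → ℕ) (u : List (Fin d)),
      IsPrefixCode (↑C : Set (List (Fin d))) ∧
      -- `g` is a bijection from `Fin n` onto `C` and `r = a ∘ g⁻¹`
      Function.Injective g ∧ C = Finset.image g Finset.univ ∧
      (∀ i, r (g i) = a i) ∧
      -- (1) `(C, r)` is w-optimal
      (∀ (D : Finset (List (Fin d))) (s : List (Fin d) → ℕ)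
          (f : List (Fin d) → List (Fin d)),
        IsPrefixCode (↑D : Set (List (Fin d))) →
        Set.InjOn f ↑C → D = C.image f → (∀ x ∈ C, r x = s (f x)) →
        (C.sup fun x => x.length + r x) ≤ D.sup fun y => y.length + s y) ∧
      -- (2) for each `i < k`, `u ++ [i] ∈ C` with label `a i`, at maximum depth
      (∀ (i : Fin n) (hik : (i : ℕ) < k),
        u ++ [(⟨(i : ℕ), lt_of_lt_of_le hik hkd⟩ : Fin d)] ∈ C ∧
        r (u ++ [(⟨(i : ℕ), lt_of_lt_of_le hik hkd⟩ : Fin d)]) = a i) ∧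
      (∀ z ∈ C, z.length ≤ u.length + 1) ∧
      -- (3) the `u ++ [i]`, `i < k`, have no other siblings
      (∀ z ∈ C, u <+: z → ∃ i : Fin d, (i : ℕ) < k ∧ z = u ++ [i]) := by
  have hkn : k ≤ n := by
    by_contra! h
    have h1 := Nat.le_of_dvd (by omega) ((Nat.modEq_iff_dvd' h.le).1 hkmod.symm)
    omega
  have hex : ∃ W, ∑ i, d ^ a i ≤ d ^ W := ⟨_, (Nat.lt_pow_self (by omega)).le⟩
  classical
  -- `W` is the optimal value, `p` the index of the largest of the `k` smallest weights.
  obtain ⟨W, hW, hWmin⟩ : ∃ W, ∑ i, d ^ a i ≤ d ^ W ∧ ∀ V, ∑ i, d ^ a i ≤ d ^ V → W ≤ V :=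
    ⟨Nat.find hex, Nat.find_spec hex, fun V hV => Nat.find_min' hex hV⟩
  obtain ⟨p, hp⟩ : ∃ p : Fin n, (p : ℕ) + 1 = k := ⟨⟨k - 1, by omega⟩, by simp; omega⟩
  have hmerge := merged_sum_le hd n k a ha hk2 hkn hkmod W p hp hW
  obtain ⟨c, hclen, hcpre⟩ := exists_code_of_sum_le hd (Function.update a p (a p + 1)) W
    (insert p (Finset.Ioi p)) (by
      rw [Finset.sum_insert (by simp), Function.update_self]
      refine le_trans (le_of_eq ?_) hmerge
      congr 1
      refine Finset.sum_congr rfl fun i hi => ?_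
      rw [Function.update_of_ne (Finset.mem_Ioi.1 hi).ne'])
  have hmemp : p ∈ insert p (Finset.Ioi p) := Finset.mem_insert_self _ _
  have hmem : ∀ i : Fin n, k ≤ i → i ∈ insert p (Finset.Ioi p) := fun i hi =>
    Finset.mem_insert_of_mem (Finset.mem_Ioi.2 (Fin.lt_def.2 (by omega)))
  have hnep : ∀ i : Fin n, k ≤ i → i ≠ p := fun i hi h => by subst h; omega
  have hulen : (c p).length + (a p + 1) = W := by simpa using hclen p hmemp
  have hlen : ∀ i : Fin n, k ≤ i → (c i).length + a i = W := fun i hi => by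
    simpa [Function.update_of_ne (hnep i hi)] using hclen i (hmem i hi)
  have hup : ∀ i : Fin n, k ≤ i → ¬ c p <+: c i := fun i hi h =>
    hnep i hi (hcpre p hmemp i (hmem i hi) h).symm
  have hup' : ∀ i : Fin n, k ≤ i → ¬ c i <+: c p := fun i hi h =>
    hnep i hi (hcpre i (hmem i hi) p hmemp h)
  obtain ⟨g, hglt, hgge⟩ : ∃ g : Fin n → List (Fin d),
      (∀ (i : Fin n) (h : (i : ℕ) < k), g i = c p ++ [⟨i, lt_of_lt_of_le h hkd⟩]) ∧
      (∀ i : Fin n, k ≤ i → g i = c i) :=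
    ⟨fun i => if h : (i : ℕ) < k then c p ++ [⟨i, lt_of_lt_of_le h hkd⟩] else c i,
      fun i h => by simp [h], fun i h => by simp [h]⟩
  have hgpre : ∀ i j, g i <+: g j → i = j := by
    intro i j h
    rcases lt_or_ge (i : ℕ) k with hi | hi <;> rcases lt_or_ge (j : ℕ) k with hj | hj
    · rw [hglt i hi, hglt j hj] at h
      have h' := h.eq_of_length (by simp)
      simp only [List.append_cancel_left_eq, List.cons.injEq, Fin.mk.injEq, and_true] at h'
      exact Fin.ext h'
    · rw [hglt i hi, hgge j hj] at h
      exact absurd ((List.prefix_append _ _).trans h) (hup j hj)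
    · rw [hgge i hi, hglt j hj] at h
      -- `c i` and `c p` are prefixes of the same word, so they are comparable.
      rcases List.prefix_or_prefix_of_prefix h (List.prefix_append _ _) with h' | h'
      · exact absurd h' (hup' i hi)
      · exact absurd h' (hup i hi)
    · rw [hgge i hi, hgge j hj] at h
      exact hcpre i (hmem i hi) j (hmem j hj) h
  have hginj : Function.Injective g := fun i j h => hgpre i j (h ▸ List.prefix_rfl)
  have hr : ∀ i, Function.extend g a 0 (g i) = a i := fun i => hginj.extend_apply a 0 i
  have hgW : ∀ i, (g i).length + a i ≤ W := by
    intro i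
    rcases lt_or_ge (i : ℕ) k with hi | hi
    · have : a i ≤ a p := ha (Fin.le_def.2 (by omega))
      rw [hglt i hi, List.length_append, List.length_singleton]
      omega
    · rw [hgge i hi, hlen i hi]
  refine ⟨Finset.univ.image g, g, Function.extend g a 0, c p, ?_, hginj, rfl, hr, ?_, ?_, ?_, ?_⟩
  · intro x hx y hy hxy
    simp only [Finset.coe_image, Finset.coe_univ, Set.image_univ, Set.mem_range] at hx hy
    obtain ⟨i, rfl⟩ := hx
    obtain ⟨j, rfl⟩ := hy
    rw [hgpre i j hxy]
  · intro D s f hD hf hDC hs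
    have hmemC : ∀ i, g i ∈ Finset.univ.image g := fun i =>
      Finset.mem_image_of_mem _ (Finset.mem_univ i)
    have hmemD : ∀ i, f (g i) ∈ D := fun i => hDC ▸ Finset.mem_image_of_mem _ (hmemC i)
    have hle : ∀ i, (f (g i)).length + a i ≤ D.sup fun y => y.length + s y := fun i => by
      rw [← hr i, hs _ (hmemC i)]
      exact Finset.le_sup (f := fun y : List (Fin d) => y.length + s y) (hmemD i)
    refine le_trans (Finset.sup_le fun x hx => ?_) (hWmin (D.sup fun y => y.length + s y) ?_)
    · obtain ⟨i, -, rfl⟩ := Finset.mem_image.1 hx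
      rw [hr]
      exact hgW i
    · refine le_trans (Finset.sum_le_sum fun i _ => Nat.pow_le_pow_right (by omega) ?_)
        (kraft_sum_le (fun i => f (g i)) _ (fun i => le_trans (Nat.le_add_right _ _) (hle i)) ?_)
      · have := hle i
        omega
      · intro i j hij
        exact hginj (hf (hmemC i) (hmemC j) (hD _ (hmemD i) _ (hmemD j) hij))
  · intro i hik
    rw [← hglt i hik]
    exact ⟨Finset.mem_image_of_mem _ (Finset.mem_univ i), hr i⟩
  · intro z hz
    obtain ⟨i, -, rfl⟩ := Finset.mem_image.1 hz
    rcases lt_or_ge (i : ℕ) k with hi | hi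
    · rw [hglt i hi]; simp
    · have h1 : a p ≤ a i := ha (Fin.le_def.2 (by omega))
      have h2 := hlen i hi
      rw [hgge i hi]
      omega
  · intro z hz hu
    obtain ⟨i, -, rfl⟩ := Finset.mem_image.1 hz
    rcases lt_or_ge (i : ℕ) k with hi | hi
    · exact ⟨⟨i, lt_of_lt_of_le hi hkd⟩, hi, hglt i hi⟩
    · rw [hgge i hi] at hu
      exact absurd hu (hup i hi)
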